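/- Let G be a connected graph that is {K33+, K5h}-free. If G contains M4 (the Möbius ladder on 8 vertices) as a minor, then G is a minor of M_n for some n ≥ 4. -/

import Mathlib

open SimpleGraph

/-- `H` is a minor of `G` (branch-set / model definition). -/
def IsMinor {W V : Type*} (H : SimpleGraph W) (G : SimpleGraph V) : Prop :=
  ∃ B : W → Set V,
    (∀ w, (B w).Nonempty) ∧
    (∀ w, (G.induce (B w)).Connected) ∧
    (Pairwise fun w₁ w₂ => Disjoint (B w₁) (B w₂)) ∧
    (∀ ⦃w₁ w₂ : W⦄, H.Adj w₁ w₂ → ∃ v₁ ∈ B w₁, ∃ v₂ ∈ B w₂, G.Adj v₁ v₂)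

def K5 : SimpleGraph (Fin 5) := ⊤

def K33 : SimpleGraph (Fin 3 ⊕ Fin 3) := completeBipartiteGraph (Fin 3) (Fin 3)

/-- A graph is planar iff it has neither a `K₅` nor a `K₃,₃` minor (Wagner's theorem). -/
def Planar {V : Type*} (G : SimpleGraph V) : Prop := ¬ IsMinor K5 G ∧ ¬ IsMinor K33 G

/-- `G / uw`: contract the edge `uw`, merging `w` into `u` (the vertex `w` becomes isolated). -/
def contractEdge {V : Type*} (G : SimpleGraph V) (u w : V) : SimpleGraph V :=
  SimpleGraph.fromRel fun a b =>
    a ≠ w ∧ b ≠ w ∧ (G.Adj a b ∨ (a = u ∧ G.Adj w b) ∨ (b = u ∧ G.Adj a w))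

/-- A nonplanar graph is almost-planar if for every edge, deletion or contraction is planar. -/
def AlmostPlanar {V : Type*} (G : SimpleGraph V) : Prop :=
  ¬ Planar G ∧ ∀ ⦃u v : V⦄, G.Adj u v →
    (Planar (G.deleteEdges {s(u, v)}) ∨ Planar (contractEdge G u v))

/-- `G` is `k`-connected: more than `k` vertices and deleting fewer than `k` vertices
leaves a connected graph. -/
def KConnected {V : Type*} (G : SimpleGraph V) (k : ℕ) : Prop :=
  k < Nat.card V ∧ ∀ s : Set V, s.ncard < k → (G.induce (sᶜ)).Connected

/-- `{G[A], G[B]}` is a `k`-separation of `G`. -/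
def IsSep {V : Type*} (G : SimpleGraph V) (k : ℕ) (A B : Set V) : Prop :=
  A ∪ B = Set.univ ∧ A ≠ Set.univ ∧ B ≠ Set.univ ∧ (A ∩ B).ncard = k ∧
  ∀ ⦃x y : V⦄, G.Adj x y → (x ∈ A ∧ y ∈ A) ∨ (x ∈ B ∧ y ∈ B)

/-- The star `K_{1,3}`, with centre `0`. -/
def K13 : SimpleGraph (Fin 4) := SimpleGraph.fromRel fun a _ => a = 0

def InternallyFourConnected {V : Type*} (G : SimpleGraph V) : Prop :=
  KConnected G 3 ∧ 5 ≤ Nat.card V ∧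
  ∀ A B : Set V, IsSep G 3 A B →
    Xor' (Nonempty (G.induce A ≃g K13)) (Nonempty (G.induce B ≃g K13))

/-- The wheel `W_n`: a cycle of length `n` plus a hub (`none`) joined to all of it. -/
def wheelGraph (n : ℕ) : SimpleGraph (Option (Fin n)) :=
  SimpleGraph.fromRel fun a b =>
    match a, b with
    | some i, some j => j.val = (i.val + 1) % n
    | none, some _ => True
    | _, _ => False

def IsWheel {V : Type*} (G : SimpleGraph V) : Prop :=
  ∃ n, 3 ≤ n ∧ Nonempty (G ≃g wheelGraph n)

/-- The double wheel `DW_n`: a cycle of length `n` plus two adjacent hubs joined to all of it. -/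
def doubleWheel (n : ℕ) : SimpleGraph (Fin n ⊕ Fin 2) :=
  SimpleGraph.fromRel fun a b =>
    match a, b with
    | .inl i, .inl j => j.val = (i.val + 1) % n
    | .inl _, .inr _ => True
    | .inr _, .inr _ => True
    | _, _ => False

/-- The Möbius ladder `M_n`: a cycle of length `2n` plus all "opposite" chords. -/
def mobiusLadder (n : ℕ) : SimpleGraph (Fin (2 * n)) :=
  SimpleGraph.fromRel fun i j =>
    j.val = (i.val + 1) % (2 * n) ∨ j.val = (i.val + n) % (2 * n)

/-- `C²_m`: a cycle of length `m` plus all chords between vertices at distance two. -/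
def squareCycle (m : ℕ) : SimpleGraph (Fin m) :=
  SimpleGraph.fromRel fun i j =>
    j.val = (i.val + 1) % m ∨ j.val = (i.val + 2) % m

/-- The alternating double wheel `AW_{2n}`: a cycle of length `2n` plus two adjacent hubs,
each joined to alternating cycle vertices. -/
def altDoubleWheel (n : ℕ) : SimpleGraph (Fin (2 * n) ⊕ Fin 2) :=
  SimpleGraph.fromRel fun a b =>
    match a, b with
    | .inl i, .inl j => j.val = (i.val + 1) % (2 * n)
    | .inl i, .inr k => i.val % 2 = k.val
    | .inr _, .inr _ => True
    | _, _ => False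

/-- The class `𝒲`: three wheels glued along a common triangle `V₀`, with no other edges. -/
def InClassW {V : Type*} (G : SimpleGraph V) : Prop :=
  ∃ P : V → Fin 4,
    (P ⁻¹' {0}).ncard = 3 ∧
    (∀ x y : V, P x = 0 → P y = 0 → x ≠ y → G.Adj x y) ∧
    (∀ i : Fin 4, i ≠ 0 → IsWheel (G.induce {v | P v = 0 ∨ P v = i})) ∧
    (∀ ⦃x y : V⦄, G.Adj x y → ∃ i : Fin 4, i ≠ 0 ∧ (P x = 0 ∨ P x = i) ∧ (P y = 0 ∨ P y = i))

/-- `EX₁`: `K₃,₃` plus a vertex joined to all of one colour class. -/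
def EX1 : SimpleGraph (Option (Fin 3 ⊕ Fin 3)) :=
  SimpleGraph.fromRel fun a b =>
    match a, b with
    | some (.inl _), some (.inr _) => True
    | none, some (.inl _) => True
    | _, _ => False

/-- `EX₂`: `K₅` plus a vertex joined to three of its vertices. -/
def EX2 : SimpleGraph (Option (Fin 5)) :=
  SimpleGraph.fromRel fun a b =>
    match a, b with
    | some i, some j => i ≠ j
    | none, some j => j.val < 3
    | _, _ => False

/-- `EX₈`: `K₃,₃` plus a vertex joined to two vertices of one class and one of the other. -/
def EX8 : SimpleGraph (Option (Fin 3 ⊕ Fin 3)) :=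
  SimpleGraph.fromRel fun a b =>
    match a, b with
    | some (.inl _), some (.inr _) => True
    | none, some x => x = Sum.inl 0 ∨ x = Sum.inl 1 ∨ x = Sum.inr 0
    | _, _ => False

/-- `K₅ʰ`: subdivide the edges `01` and `02` of `K₅` and join the two subdivision vertices. -/
def K5h : SimpleGraph (Fin 5 ⊕ Fin 2) :=
  SimpleGraph.fromRel fun a b =>
    match a, b with
    | .inl i, .inl j =>
        i ≠ j ∧ ¬(i = 0 ∧ j = 1) ∧ ¬(i = 1 ∧ j = 0) ∧ ¬(i = 0 ∧ j = 2) ∧ ¬(i = 2 ∧ j = 0)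
    | .inl i, .inr k => (k = 0 ∧ (i = 0 ∨ i = 1)) ∨ (k = 1 ∧ (i = 0 ∨ i = 2))
    | .inr _, .inr _ => True
    | _, _ => False

/-- `K₃,₃ʰ`: subdivide two edges of `K₃,₃` at a common endpoint and join
the two subdivision vertices. -/
def K33h : SimpleGraph ((Fin 3 ⊕ Fin 3) ⊕ Fin 2) :=
  SimpleGraph.fromRel fun a b =>
    match a, b with
    | .inl (.inl i), .inl (.inr j) => ¬(i = 0 ∧ (j = 0 ∨ j = 1))
    | .inl (.inr j), .inl (.inl i) => ¬(i = 0 ∧ (j = 0 ∨ j = 1))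
    | .inl x, .inr k =>
        (k = 0 ∧ (x = Sum.inl 0 ∨ x = Sum.inr 0)) ∨ (k = 1 ∧ (x = Sum.inl 0 ∨ x = Sum.inr 1))
    | .inr _, .inr _ => True
    | _, _ => False

/-- `K₅⁺`: `K₅` plus a pendant vertex. -/
def K5plus : SimpleGraph (Option (Fin 5)) :=
  SimpleGraph.fromRel fun a b =>
    match a, b with
    | some i, some j => i ≠ j
    | none, some j => j = 0
    | _, _ => False

/-- `K₃,₃⁺`: `K₃,₃` plus a pendant vertex. -/
def K33plus : SimpleGraph (Option (Fin 3 ⊕ Fin 3)) :=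
  SimpleGraph.fromRel fun a b =>
    match a, b with
    | some (.inl _), some (.inr _) => True
    | none, some x => x = Sum.inl 0
    | _, _ => False

/-- `K₅ ⊕ e`: disjoint union of `K₅` and one edge. -/
def K5oplus : SimpleGraph (Fin 5 ⊕ Fin 2) :=
  SimpleGraph.fromRel fun a b =>
    match a, b with
    | .inl i, .inl j => i ≠ j
    | .inr _, .inr _ => True
    | _, _ => False

/-- `K₃,₃ ⊕ e`: disjoint union of `K₃,₃` and one edge. -/
def K33oplus : SimpleGraph ((Fin 3 ⊕ Fin 3) ⊕ Fin 2) :=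
  SimpleGraph.fromRel fun a b =>
    match a, b with
    | .inl (.inl _), .inl (.inr _) => True
    | .inr _, .inr _ => True
    | _, _ => False

/-- The triad addition of `H` at `x y z`: add a new vertex joined to `x`, `y`, `z`. -/
def triadAddition {U : Type*} (H : SimpleGraph U) (x y z : U) : SimpleGraph (Option U) :=
  SimpleGraph.fromRel fun a b =>
    match a, b with
    | some u, some v => H.Adj u v
    | none, some u => u = x ∨ u = y ∨ u = z
    | _, _ => False

def IsTriadAdditionOf {V U : Type*} (G : SimpleGraph V) (H : SimpleGraph U) : Prop :=
  ∃ x y z : U, x ≠ y ∧ y ≠ z ∧ x ≠ z ∧ Nonempty (G ≃g triadAddition H x y z)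

/-- `G` is obtained from `H` by subdividing (possibly repeatedly) edges of `H`,
all of which lie in `S`. -/
def IsSubdivisionWithin {V W : Type*} (G : SimpleGraph V) (H : SimpleGraph W)
    (S : Set (Sym2 W)) : Prop :=
  ∃ (f : W ↪ V) (p : ∀ ⦃u v : W⦄, H.Adj u v → G.Walk (f u) (f v)),
    (∀ ⦃u v : W⦄ (h : H.Adj u v), (p h).IsPath) ∧
    (∀ ⦃u v : W⦄ (h : H.Adj u v), p h.symm = (p h).reverse) ∧
    (∀ ⦃u v : W⦄ (h : H.Adj u v), s(u, v) ∉ S → (p h).length = 1) ∧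
    (∀ ⦃u v : W⦄ (h : H.Adj u v) (w : W), f w ∈ (p h).support → w = u ∨ w = v) ∧
    (∀ ⦃u v u' v' : W⦄ (h : H.Adj u v) (h' : H.Adj u' v'), s(u, v) ≠ s(u', v') →
      ∀ x : V, x ∈ (p h).support → x ∈ (p h').support → x ∈ Set.range f) ∧
    (∀ x : V, x ∈ Set.range f ∨ ∃ (u v : W) (h : H.Adj u v), x ∈ (p h).support) ∧
    (∀ e ∈ G.edgeSet, ∃ (u v : W) (h : H.Adj u v), e ∈ (p h).edges)

/-- `G` is a subdivision of `H`. -/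
def IsSubdivision {V W : Type*} (G : SimpleGraph V) (H : SimpleGraph W) : Prop :=
  IsSubdivisionWithin G H Set.univ

/-- `D(H)`: the set of edges of `H` whose deletion leaves a planar graph. -/
def Dset {U : Type*} (H : SimpleGraph U) : Set (Sym2 U) :=
  {e | e ∈ H.edgeSet ∧ Planar (H.deleteEdges {e})}

/-- `G[A]` together with all edges between vertices of `T` (`T ⊆ A` intended). -/
def deltaGraph {V : Type*} (G : SimpleGraph V) (A T : Set V) : SimpleGraph A :=
  SimpleGraph.fromRel fun a b => G.Adj a.1 b.1 ∨ (a.1 ∈ T ∧ b.1 ∈ T)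

/-- `G[A]^Y` for the separation `{G[A], G[B]}`: add a new vertex joined to `A ∩ B`. -/
def sepY {V : Type*} (G : SimpleGraph V) (A B : Set V) : SimpleGraph (Option A) :=
  SimpleGraph.fromRel fun x y =>
    match x, y with
    | some a, some b => G.Adj a.1 b.1
    | none, some a => a.1 ∈ A ∩ B
    | _, _ => False

/-- `G₂` is obtained from `G` by adding isolated vertices. -/
def AddIsolated {V₂ V : Type*} (G₂ : SimpleGraph V₂) (G : SimpleGraph V) : Prop :=
  ∃ f : V ↪ V₂, (∀ a b : V, G₂.Adj (f a) (f b) ↔ G.Adj a b) ∧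
    ∀ x : V₂, x ∉ Set.range f → ∀ y : V₂, ¬ G₂.Adj x y

/-- The set of non-isolated vertices of `G` (so `G* = G.induce (core G)`). -/
def core {V : Type*} (G : SimpleGraph V) : Set V := {v | ∃ w, G.Adj v w}

/-- `G` is obtained from `G'` by 3-summing wheels onto distinct triangles of `G'`. -/
def SumWheelsOnto {V U : Type*} (G : SimpleGraph V) (G' : SimpleGraph U) : Prop :=
  ∃ (g : U ↪ V) (k : ℕ) (Wp : Fin k → Set V) (T : Fin k → Set U),
    (∀ i, (T i).ncard = 3) ∧
    (∀ i, ∀ x ∈ T i, ∀ y ∈ T i, x ≠ y → G'.Adj x y) ∧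
    Function.Injective T ∧
    (∀ i, Disjoint (Wp i) (Set.range ⇑g)) ∧
    (Pairwise fun i j => Disjoint (Wp i) (Wp j)) ∧
    (Set.range ⇑g ∪ ⋃ i, Wp i) = Set.univ ∧
    (∀ i, IsWheel (deltaGraph G (Wp i ∪ ⇑g '' T i) (⇑g '' T i))) ∧
    (∀ a b : U, G.Adj (g a) (g b) → G'.Adj a b) ∧
    (∀ a b : U, G'.Adj a b → (G.Adj (g a) (g b) ∨ ∃ i, a ∈ T i ∧ b ∈ T i)) ∧
    (∀ ⦃x y : V⦄, G.Adj x y → (x ∈ Set.range ⇑g ∧ y ∈ Set.range ⇑g) ∨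
      ∃ i, x ∈ Wp i ∪ ⇑g '' T i ∧ y ∈ Wp i ∪ ⇑g '' T i) ∧
    (∀ i, ∀ x ∈ Wp i, ∀ ⦃y : V⦄, G.Adj x y → y ∈ Wp i ∪ ⇑g '' T i)

/-- `H` has an edge whose deletion and contraction are both nonplanar. -/
def HasBadEdge {V : Type*} (H : SimpleGraph V) : Prop :=
  ∃ u v : V, H.Adj u v ∧ ¬ Planar (H.deleteEdges {s(u, v)}) ∧ ¬ Planar (contractEdge H u v)

/- Fix a model of `M₄` in `G`. Deleting a rung of `M₄` leaves a graph with a `K₃,₃` minor, and in a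
connected `K33plus`-free graph the branch sets of a `K₃,₃` model cover every vertex. So each branch
set can be replaced by a path crossing it, and the paths form a Hamiltonian cycle `v : ℤ → V` of
period `n`, on which the rungs of the model are four crossing chords. Cutting the cycle into eight
arcs in different ways gives further models of `M₄`: excluding `K33plus` forces every chord of the
cycle to span three consecutive arcs between ends of rungs, and excluding `K5h` then forces any two
chords to cross or share an end. The ends of the chords are thus paired in monotone order, and
stretching the cycle to length `2 * n` by repeating vertices can make the two ends of each chord
opposite: contracting the repeated vertices of `mobiusLadder n` leaves a graph containing `G`. -/

section Models

variable {U V W : Type*} {F : SimpleGraph U} {H H' : SimpleGraph W} {G : SimpleGraph V}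
  {A A' C C' S T : Set V} {B : W → Set V}

/-- Two vertex sets touch if some edge joins them. -/
def Touches (G : SimpleGraph V) (A C : Set V) : Prop :=
  ∃ a ∈ A, ∃ c ∈ C, G.Adj a c

theorem Touches.symm (h : Touches G A C) : Touches G C A := by
  obtain ⟨a, ha, c, hc, hac⟩ := h
  exact ⟨c, hc, a, ha, hac.symm⟩

theorem Touches.mono (hA : A ⊆ A') (hC : C ⊆ C') (h : Touches G A C) : Touches G A' C' := by
  obtain ⟨a, ha, c, hc, hac⟩ := h
  exact ⟨a, hA ha, c, hC hc, hac⟩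

/-- The branch sets `B w` form a model of `H` in `G`, witnessing that `H` is a minor of `G`. -/
structure IsMinorModel (H : SimpleGraph W) (G : SimpleGraph V) (B : W → Set V) : Prop where
  connected (w : W) : (G.induce (B w)).Connected
  disjoint : Pairwise fun w₁ w₂ => Disjoint (B w₁) (B w₂)
  touches ⦃w₁ w₂ : W⦄ : H.Adj w₁ w₂ → Touches G (B w₁) (B w₂)

theorem IsMinorModel.isMinor (h : IsMinorModel H G B) : IsMinor H G :=
  ⟨B, fun w => Set.nonempty_coe_sort.1 (h.connected w).nonempty, h.connected, h.disjoint,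
    h.touches⟩

theorem IsMinor.exists_isMinorModel (h : IsMinor H G) : ∃ B, IsMinorModel H G B := by
  obtain ⟨B, -, hconn, hdisj, htouch⟩ := h
  exact ⟨B, hconn, hdisj, htouch⟩

theorem IsMinorModel.eq_of_mem (h : IsMinorModel H G B) {w₁ w₂ : W} {v : V} (h₁ : v ∈ B w₁)
    (h₂ : v ∈ B w₂) : w₁ = w₂ :=
  by_contra fun hne => Set.disjoint_left.1 (h.disjoint hne) h₁ h₂

theorem IsMinorModel.mono (hle : H' ≤ H) (h : IsMinorModel H G B) : IsMinorModel H' G B where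
  connected := h.connected
  disjoint := h.disjoint
  touches _ _ hw := h.touches (hle hw)

theorem IsMinorModel.comp {H' : SimpleGraph U} (h : IsMinorModel H G B) (f : H' →g H)
    (hf : Function.Injective f) : IsMinorModel H' G (B ∘ f) where
  connected u := h.connected (f u)
  disjoint := h.disjoint.comp_of_injective hf
  touches _ _ hu := h.touches (f.map_adj hu)

theorem IsMinorModel.sup_fromRel (h : IsMinorModel H G B) {r : W → W → Prop}
    (hr : ∀ a b, r a b → Touches G (B a) (B b)) : IsMinorModel (H ⊔ fromRel r) G B where
  connected := h.connected
  disjoint := h.disjoint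
  touches a b hab := by
    obtain hab | ⟨-, hab | hba⟩ := hab
    exacts [h.touches hab, hr a b hab, (hr b a hba).symm]

theorem IsMinorModel.update [DecidableEq W] (h : IsMinorModel H G B) {w : W} (hS : S ⊆ B w)
    (hconn : (G.induce S).Connected) (htouch : ∀ w', H.Adj w w' → Touches G S (B w')) :
    IsMinorModel H G (Function.update B w S) where
  connected w' := by
    obtain rfl | hw' := eq_or_ne w' w
    · rwa [Function.update_self]
    · rw [Function.update_of_ne hw']
      exact h.connected w'
  disjoint w₁ w₂ hne := by
    have hsub : ∀ w', Function.update B w S w' ⊆ B w' := update_le_self_iff.2 hS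
    exact (h.disjoint hne).mono (hsub w₁) (hsub w₂)
  touches w₁ w₂ hadj := by
    obtain rfl | h₁ := eq_or_ne w₁ w
    · rw [Function.update_self, Function.update_of_ne hadj.ne']
      exact htouch w₂ hadj
    · rw [Function.update_of_ne h₁]
      obtain rfl | h₂ := eq_or_ne w₂ w
      · rw [Function.update_self]
        exact (htouch w₁ hadj.symm).symm
      · rw [Function.update_of_ne h₂]
        exact h.touches hadj

theorem reachable_induce_of_subset (hST : S ⊆ T) (hS : (G.induce S).Connected) {x y : V}
    (hx : x ∈ S) (hy : y ∈ S) : (G.induce T).Reachable ⟨x, hST hx⟩ ⟨y, hST hy⟩ :=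
  (hS.preconnected ⟨x, hx⟩ ⟨y, hy⟩).map (induceHomOfLE G hST).toHom

theorem IsMinorModel.connected_induce_biUnion (h : IsMinorModel H G B) {I : Set W}
    (hI : (H.induce I).Connected) : (G.induce (⋃ w ∈ I, B w)).Connected := by
  have hsub : ∀ w : I, B w ⊆ ⋃ w ∈ I, B w := fun w => Set.subset_biUnion_of_mem w.2
  have walk_lift : ∀ {w w' : I} (_ : (H.induce I).Walk w w') {x y : V} (hx : x ∈ B w)
      (hy : y ∈ B w'),
      (G.induce (⋃ w ∈ I, B w)).Reachable ⟨x, hsub w hx⟩ ⟨y, hsub w' hy⟩ := by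
    intro w w' p
    induction p with
    | nil => exact reachable_induce_of_subset (hsub _) (h.connected _)
    | @cons w u _ hadj _ ih =>
      intro x y hx hy
      obtain ⟨a, ha, b, hb, hab⟩ := h.touches hadj
      have step : (G.induce (⋃ w ∈ I, B w)).Adj ⟨a, hsub w ha⟩ ⟨b, hsub u hb⟩ := hab
      exact (reachable_induce_of_subset (hsub w) (h.connected w) hx ha).trans
        (step.reachable.trans (ih hb hy))
  obtain ⟨w₀⟩ := hI.nonempty
  obtain ⟨x₀, hx₀⟩ := (h.connected w₀).nonempty
  rw [connected_iff_exists_forall_reachable]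
  refine ⟨⟨x₀, hsub w₀ hx₀⟩, fun ⟨y, hy⟩ => ?_⟩
  obtain ⟨w, hw, hyw⟩ := Set.mem_iUnion₂.1 hy
  obtain ⟨p⟩ := hI.preconnected w₀ ⟨w, hw⟩
  exact walk_lift p hx₀ hyw

theorem IsMinorModel.trans {C : U → Set W} (hC : IsMinorModel F H C) (hB : IsMinorModel H G B) :
    IsMinorModel F G fun u => ⋃ w ∈ C u, B w where
  connected u := hB.connected_induce_biUnion (hC.connected u)
  disjoint u₁ u₂ hne := by
    simp only [Set.disjoint_iUnion_left, Set.disjoint_iUnion_right]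
    intro w₂ h₂ w₁ h₁
    exact hB.disjoint (Set.disjoint_iff_forall_ne.1 (hC.disjoint hne) h₁ h₂)
  touches u₁ u₂ hadj := by
    obtain ⟨w₁, h₁, w₂, h₂, hw⟩ := hC.touches hadj
    exact (hB.touches hw).mono (Set.subset_biUnion_of_mem h₁) (Set.subset_biUnion_of_mem h₂)

theorem IsMinor.of_isMinorModel (h : IsMinor F H) (hB : IsMinorModel H G B) : IsMinor F G := by
  obtain ⟨C, hC⟩ := h.exists_isMinorModel
  exact (hC.trans hB).isMinor

theorem isMinorModel_fiber (φ : V → W) (hconn : ∀ w, (G.induce (φ ⁻¹' {w})).Connected)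
    (hlift : ∀ w₁ w₂, H.Adj w₁ w₂ → ∃ x y, φ x = w₁ ∧ φ y = w₂ ∧ G.Adj x y) :
    IsMinorModel H G fun w => φ ⁻¹' {w} where
  connected := hconn
  disjoint := pairwise_disjoint_fiber φ
  touches w₁ w₂ hw := by
    obtain ⟨x, y, hx, hy, hxy⟩ := hlift w₁ w₂ hw
    exact ⟨x, hx, y, hy, hxy⟩

/-- Contracting stars: each fibre of `φ` consists of its centre `hub w` and neighbours of it. -/
theorem isMinorModel_fiber_of_star (φ : V → W) (hub : W → V) (hhub : ∀ w, φ (hub w) = w)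
    (hstar : ∀ v, v = hub (φ v) ∨ G.Adj (hub (φ v)) v)
    (hlift : ∀ w₁ w₂, H.Adj w₁ w₂ → ∃ x y, φ x = w₁ ∧ φ y = w₂ ∧ G.Adj x y) :
    IsMinorModel H G fun w => φ ⁻¹' {w} := by
  refine isMinorModel_fiber φ (fun w => ?_) hlift
  rw [connected_iff_exists_forall_reachable]
  refine ⟨⟨hub w, hhub w⟩, ?_⟩
  rintro ⟨v, rfl⟩
  obtain hv | hv := hstar v
  · have hv' : (⟨hub (φ v), hhub (φ v)⟩ : φ ⁻¹' {φ v}) = ⟨v, rfl⟩ := Subtype.ext hv.symm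
    exact hv' ▸ Reachable.rfl
  · exact Adj.reachable (G := G.induce _) hv

end Models

section SmallMinors

instance : DecidableRel K33.Adj := by
  unfold K33 completeBipartiteGraph
  infer_instance

instance : DecidableRel K33plus.Adj := by
  rintro (_ | _ | _) (_ | _ | _) <;> exact inferInstanceAs (Decidable (_ ∧ (_ ∨ _)))

instance : DecidableRel K5h.Adj := by
  rintro (_ | _) (_ | _) <;> exact inferInstanceAs (Decidable (_ ∧ (_ ∨ _)))

instance (n : ℕ) : DecidableRel (mobiusLadder n).Adj := by
  unfold mobiusLadder
  infer_instance

theorem isMinor_K33_mobiusLadder_deleteEdges (k : Fin (2 * 4)) :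
    IsMinor K33 ((mobiusLadder 4).deleteEdges {s(k, k + 4)}) := by
  let φ : Fin (2 * 4) → Fin 3 ⊕ Fin 3 :=
    ![.inl 0, .inl 0, .inr 0, .inl 1, .inr 1, .inr 1, .inl 2, .inr 2]
  refine (isMinorModel_fiber_of_star (fun x => φ (x - k))
    (Sum.elim ![k, k + 3, k + 6] ![k + 2, k + 4, k + 7]) ?_ ?_ ?_).isMinor
  all_goals revert k; decide +kernel

set_option synthInstance.maxSize 512 in
theorem isMinor_K33plus_mobiusLadder_sup_fromRel_zero_two :
    IsMinor K33plus (mobiusLadder 4 ⊔ fromRel fun a b => a = 0 ∧ b = 2) := by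
  let φ : Fin (2 * 4) → Option (Fin 3 ⊕ Fin 3) :=
    ![some (.inl 0), none, some (.inr 0), some (.inl 1), some (.inr 1), some (.inr 1),
      some (.inl 2), some (.inr 2)]
  refine (isMinorModel_fiber_of_star φ (fun o => o.elim 1 (Sum.elim ![0, 3, 6] ![2, 4, 7]))
    ?_ ?_ ?_).isMinor
  all_goals decide +kernel

set_option synthInstance.maxSize 512 in
theorem isMinor_K5h_mobiusLadder_sup_fromRel_zero_three_four_seven :
    IsMinor K5h (mobiusLadder 4 ⊔ fromRel fun a b => (a = 0 ∧ b = 3) ∨ (a = 4 ∧ b = 7)) := by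
  let φ : Fin (2 * 4) → Fin 5 ⊕ Fin 2 :=
    ![.inl 3, .inl 0, .inr 0, .inl 1, .inl 4, .inl 0, .inr 1, .inl 2]
  refine (isMinorModel_fiber_of_star φ (Sum.elim ![1, 3, 7, 0, 4] ![2, 6]) ?_ ?_ ?_).isMinor
  all_goals decide +kernel

end SmallMinors

section Spanning

variable {V : Type*} {G : SimpleGraph V}

theorem exists_iso_K33_apply_eq (w : Fin 3 ⊕ Fin 3) : ∃ σ : K33 ≃g K33, σ (.inl 0) = w := by
  obtain i | i := w
  · refine ⟨⟨Equiv.sumCongr (Equiv.swap 0 i) (Equiv.refl _), ?_⟩, ?_⟩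
    · rintro (_ | _) (_ | _) <;> exact Iff.rfl
    · simp
  · refine ⟨⟨(Equiv.sumCongr (Equiv.swap 0 i) (Equiv.refl _)).trans (Equiv.sumComm _ _), ?_⟩, ?_⟩
    · rintro (_ | _) (_ | _) <;> exact or_comm
    · simp

theorem IsMinorModel.isMinor_K33plus {B : Fin 3 ⊕ Fin 3 → Set V} (h : IsMinorModel K33 G B)
    {x : V} (hx : ∀ w, x ∉ B w) (htouch : Touches G {x} (B (.inl 0))) : IsMinor K33plus G := by
  have touch_of_rel : ∀ o₁ o₂ : Option (Fin 3 ⊕ Fin 3), (match o₁, o₂ with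
      | some (.inl _), some (.inr _) => True
      | none, some w => w = .inl 0
      | _, _ => False : Prop) → Touches G (o₁.elim {x} B) (o₂.elim {x} B) := by
    rintro (_ | i | i) (_ | j | j) hij
    case none.some.inl => exact Sum.inl_injective hij ▸ htouch
    case some.inl.some.inr => exact h.touches (by simp [K33])
    all_goals simp_all
  refine IsMinorModel.isMinor (B := fun o => o.elim {x} B) ⟨?_, ?_, ?_⟩
  · rintro (_ | w)
    · simp
    · exact h.connected w
  · rintro (_ | w₁) (_ | w₂) hne
    · exact absurd rfl hne
    · exact Set.disjoint_singleton_left.2 (hx w₂)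
    · exact Set.disjoint_singleton_right.2 (hx w₁)
    · exact h.disjoint fun heq => hne (congrArg some heq)
  · rintro o₁ o₂ ⟨-, hadj | hadj⟩
    · exact touch_of_rel o₁ o₂ hadj
    · exact (touch_of_rel o₂ o₁ hadj).symm

theorem IsMinorModel.exists_mem_of_K33 {B : Fin 3 ⊕ Fin 3 → Set V} (h : IsMinorModel K33 G B)
    (hG : G.Connected) (hfree : ¬ IsMinor K33plus G) (v : V) : ∃ w, v ∈ B w := by
  by_contra hv
  obtain ⟨z, hz⟩ := (h.connected (.inl 0)).nonempty
  obtain ⟨p⟩ := hG.preconnected v z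
  obtain ⟨d, -, hfst, hsnd⟩ := p.exists_boundary_dart {x | ¬ ∃ w, x ∈ B w} hv
    (not_not.2 ⟨_, hz⟩)
  obtain ⟨w, hw⟩ := not_not.1 hsnd
  obtain ⟨σ, rfl⟩ := exists_iso_K33_apply_eq w
  refine hfree ((h.comp σ.toHom σ.injective).isMinor_K33plus (x := d.fst) ?_ ?_)
  · exact fun w hd => hfst ⟨σ w, hd⟩
  · exact ⟨d.fst, rfl, d.snd, hw, d.adj⟩

theorem IsMinorModel.exists_mem_of_mobiusLadder_deleteEdges {B : Fin (2 * 4) → Set V}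
    {k : Fin (2 * 4)} (h : IsMinorModel ((mobiusLadder 4).deleteEdges {s(k, k + 4)}) G B)
    (hG : G.Connected) (hfree : ¬ IsMinor K33plus G) (v : V) : ∃ i, v ∈ B i := by
  obtain ⟨C, hC⟩ := (isMinor_K33_mobiusLadder_deleteEdges k).exists_isMinorModel
  obtain ⟨w, hw⟩ := (hC.trans h).exists_mem_of_K33 hG hfree v
  obtain ⟨i, -, hi⟩ := Set.mem_iUnion₂.1 hw
  exact ⟨i, hi⟩

theorem IsMinorModel.exists_mem_of_mobiusLadder {B : Fin (2 * 4) → Set V}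
    (h : IsMinorModel (mobiusLadder 4) G B) (hG : G.Connected) (hfree : ¬ IsMinor K33plus G)
    (v : V) : ∃ i, v ∈ B i :=
  (h.mono (deleteEdges_le {s(0, 0 + 4)})).exists_mem_of_mobiusLadder_deleteEdges hG hfree v

/-- Shrinking `B k` to `S` destroys at most the rung at `k`, so the branch sets still cover. -/
theorem IsMinorModel.eq_of_subset_of_touches {B : Fin (2 * 4) → Set V}
    (h : IsMinorModel (mobiusLadder 4) G B) (hG : G.Connected) (hfree : ¬ IsMinor K33plus G)
    {k : Fin (2 * 4)} {S : Set V} (hS : S ⊆ B k) (hconn : (G.induce S).Connected)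
    (hnext : Touches G S (B (k + 1))) (hprev : Touches G S (B (k - 1))) : S = B k := by
  classical
  have nbrs : ∀ k j : Fin (2 * 4), ((mobiusLadder 4).deleteEdges {s(k, k + 4)}).Adj k j →
      j = k + 1 ∨ j = k - 1 := by decide
  have model := (h.mono (deleteEdges_le {s(k, k + 4)})).update hS hconn fun j hj => by
    obtain rfl | rfl := nbrs k j hj
    exacts [hnext, hprev]
  refine hS.antisymm fun v hv => ?_
  obtain ⟨i, hi⟩ := model.exists_mem_of_mobiusLadder_deleteEdges hG hfree v
  obtain rfl | hik := eq_or_ne i k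
  · rwa [Function.update_self] at hi
  · rw [Function.update_of_ne hik] at hi
    exact absurd (h.eq_of_mem hi hv) hik

end Spanning

section IntResidue

variable {m : ℕ} [NeZero m]

/-- The residue of an integer modulo `m`, as an index in `Fin m`. -/
def intResidue (m : ℕ) [NeZero m] (x : ℤ) : Fin m :=
  ⟨(x % m).toNat, (Int.toNat_lt_of_ne_zero (NeZero.ne m)).2
    (Int.emod_lt_of_pos x (Int.natCast_pos.2 (NeZero.pos m)))⟩

theorem natCast_val_intResidue (x : ℤ) : ((intResidue m x : ℕ) : ℤ) = x % m :=
  Int.toNat_of_nonneg (Int.emod_nonneg x (Int.natCast_ne_zero.2 (NeZero.ne m)))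

theorem intResidue_eq_iff {x y : ℤ} : intResidue m x = intResidue m y ↔ x ≡ y [ZMOD m] := by
  rw [← Fin.val_inj, ← Int.natCast_inj, natCast_val_intResidue, natCast_val_intResidue]
  rfl

theorem intResidue_val (i : Fin m) : intResidue m (i : ℕ) = i := by
  rw [← Fin.val_inj, ← Int.natCast_inj, natCast_val_intResidue]
  exact_mod_cast Nat.mod_eq_of_lt i.2

theorem val_intResidue_add_natCast (x : ℤ) (k : ℕ) :
    (intResidue m (x + k) : ℕ) = (intResidue m x + k) % m := by
  rw [← Int.natCast_inj]
  push_cast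
  rw [natCast_val_intResidue, natCast_val_intResidue, Int.emod_add_emod]

end IntResidue

section UnrolledCycle

variable {V : Type*} {G : SimpleGraph V} {n : ℕ} {v : ℤ → V}

/-- `v` runs along a Hamiltonian cycle of `G` of length `n`, unrolled to the integers. -/
structure IsUnrolledCycle (G : SimpleGraph V) (n : ℕ) (v : ℤ → V) : Prop where
  eq_iff (x y : ℤ) : v x = v y ↔ x ≡ y [ZMOD n]
  surjective : Function.Surjective v
  adj_add_one (x : ℤ) : G.Adj (v x) (v (x + 1))

/-- The positions `t i`, along an unrolled Hamiltonian cycle of length `n`, of the ends of four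
pairwise crossing chords; the ends of each chord are four indices apart. -/
structure IsRungSequence (G : SimpleGraph V) (n : ℕ) (v : ℤ → V) (t : ℤ → ℤ) : Prop where
  strictMono : StrictMono t
  apply_add_eight (i : ℤ) : t (i + 8) = t i + n
  adj (i : ℤ) : G.Adj (v (t i)) (v (t (i + 4)))

theorem isUnrolledCycle_get_intResidue {W : List V} [NeZero W.length] (hnodup : W.Nodup)
    (hmem : ∀ x, x ∈ W) (hchain : (W ++ W).IsChain G.Adj) :
    IsUnrolledCycle G W.length fun x => W.get (intResidue W.length x) where
  eq_iff x y := by rw [← intResidue_eq_iff, hnodup.get_inj_iff]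
  surjective x := by
    obtain ⟨k, rfl⟩ := List.mem_iff_get.1 (hmem x)
    exact ⟨k, congrArg W.get (intResidue_val k)⟩
  adj_add_one x := by
    have hlt := (intResidue W.length x).2
    have hadj := List.isChain_iff_getElem.1 hchain (intResidue W.length x)
      (by rw [List.length_append]; lia)
    have hsucc := val_intResidue_add_natCast (m := W.length) x 1
    rw [List.getElem_append_left hlt] at hadj
    simp only [List.get_eq_getElem]
    push_cast at hsucc
    obtain hlt' | heq := Nat.lt_or_eq_of_le (Nat.succ_le_of_lt hlt)
    · simp only [hsucc, Nat.mod_eq_of_lt hlt']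
      rwa [List.getElem_append_left hlt'] at hadj
    · have hzero : ((intResidue W.length x : ℕ) + 1) % W.length = 0 := by
        rw [← Nat.succ_eq_add_one, heq, Nat.mod_self]
      simp only [hsucc, hzero]
      rw [List.getElem_append_right heq.ge] at hadj
      simpa only [← Nat.succ_eq_add_one, heq, Nat.sub_self] using hadj

theorem IsUnrolledCycle.exists_isRungSequence (hv : IsUnrolledCycle G n v) {p : Fin 8 → Fin n}
    (hp : StrictMono p) (hadj : ∀ i, G.Adj (v (p i : ℕ)) (v (p (i + 4) : ℕ))) :
    ∃ t, IsRungSequence G n v t := by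
  have val_eq := natCast_val_intResidue (m := 8)
  have v_eq : ∀ i : ℤ, v ((p (intResidue 8 i) : ℕ) + n * (i / 8)) = v (p (intResidue 8 i) : ℕ) :=
    fun i => (hv.eq_iff _ _).2 (by simp [Int.ModEq])
  refine ⟨fun i => (p (intResidue 8 i) : ℕ) + n * (i / 8), strictMono_int_of_lt_succ fun i => ?_,
    fun i => ?_, fun i => ?_⟩
  · have hi := val_eq i
    have hi' := val_eq (i + 1)
    push_cast at hi hi'
    by_cases hlast : i % 8 = 7
    · have hdiv : (i + 1) / 8 = i / 8 + 1 := by lia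
      have := (p (intResidue 8 i)).2
      rw [hdiv]
      lia
    · have hdiv : (i + 1) / 8 = i / 8 := by lia
      have hlt : intResidue 8 i < intResidue 8 (i + 1) := by
        rw [Fin.lt_def]
        omega
      rw [hdiv]
      exact Int.add_lt_add_right (Int.ofNat_lt.2 (hp hlt)) _
  · have hres : intResidue 8 (i + 8) = intResidue 8 i :=
      intResidue_eq_iff.2 (Int.add_modulus_modEq_iff.2 rfl)
    have hdiv : (i + 8) / 8 = i / 8 + 1 := by lia
    simp only [hres, hdiv]
    ring
  · have hres : intResidue 8 (i + 4) = intResidue 8 i + 4 :=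
      Fin.ext (val_intResidue_add_natCast i 4)
    rw [v_eq, v_eq, hres]
    exact hadj _

theorem exists_isChain_of_connected_induce {S : Set V} (hS : (G.induce S).Connected) {x y : V}
    (hx : x ∈ S) (hy : y ∈ S) :
    ∃ L : List V, L.IsChain G.Adj ∧ L.Nodup ∧ L.head? = some x ∧ L.getLast? = some y ∧
      (∀ z ∈ L, z ∈ S) ∧ (G.induce {z | z ∈ L}).Connected := by
  obtain ⟨p, hp⟩ := (hS.preconnected ⟨x, hx⟩ ⟨y, hy⟩).exists_isPath
  let f : G.induce S ↪g G := Embedding.induce S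
  let q : G.Walk x y := p.map f.toHom
  refine ⟨q.support, q.isChain_adj_support, (hp.map f.injective).support_nodup, ?_, ?_, ?_,
    q.connected_induce_support⟩
  · rw [List.head?_eq_some_head q.support_ne_nil, Walk.head_support]
  · rw [List.getLast?_eq_some_getLast q.support_ne_nil, Walk.getLast_support]
  · intro z hz
    obtain ⟨a, -, rfl⟩ := List.mem_map.1 (Walk.support_map f.toHom p ▸ hz)
    exact a.2

theorem IsMinorModel.exists_lists {B : Fin (2 * 4) → Set V}
    (h : IsMinorModel (mobiusLadder 4) G B) (hG : G.Connected) (hfree : ¬ IsMinor K33plus G) :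
    ∃ L : Fin (2 * 4) → List V, (∀ i, {x | x ∈ L i} = B i) ∧ (∀ i, (L i).Nodup) ∧
      (∀ i, (L i).IsChain G.Adj) ∧
      ∀ i, ∀ x ∈ (L i).getLast?, ∀ y ∈ (L (i + 1)).head?, G.Adj x y := by
  have rim : ∀ i, (mobiusLadder 4).Adj i (i + 1) := by decide
  choose last hlast first hfirst hadj using fun i => h.touches (rim i)
  have hfirst' : ∀ i, first (i - 1) ∈ B i := fun i => by
    simpa only [sub_add_cancel] using hfirst (i - 1)
  choose L hchain hnodup hhead hgetLast hsub hconn using fun i =>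
    exists_isChain_of_connected_induce (h.connected i) (hfirst' i) (hlast i)
  refine ⟨L, fun i => ?_, hnodup, hchain, fun i x hx y hy => ?_⟩
  · refine h.eq_of_subset_of_touches hG hfree (hsub i) (hconn i) ?_ ?_
    · exact ⟨last i, List.mem_of_getLast? (hgetLast i), _, hfirst i, hadj i⟩
    · have hadj' := (hadj (i - 1)).symm
      exact ⟨_, List.mem_of_head? (hhead i), _, hlast (i - 1), hadj'⟩
  · rw [hgetLast, Option.mem_some_iff] at hx
    rw [hhead, Option.mem_some_iff, add_sub_cancel_right] at hy
    exact hx ▸ hy ▸ hadj i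

theorem IsMinorModel.exists_rung_ends {B : Fin (2 * 4) → Set V}
    (h : IsMinorModel (mobiusLadder 4) G B) :
    ∃ z : Fin (2 * 4) → V, (∀ i, z i ∈ B i) ∧ ∀ i, G.Adj (z i) (z (i + 4)) := by
  have rung : ∀ i, (mobiusLadder 4).Adj i (i + 4) := by decide
  have add_four_add_four : ∀ i : Fin (2 * 4), i + 4 + 4 = i := by decide
  have add_four_lt : ∀ i : Fin (2 * 4), i + 4 < 4 ↔ ¬ i < 4 := by decide
  choose a ha b hb hab using fun i => h.touches (rung i)
  refine ⟨fun i => if i < 4 then a i else b (i + 4), fun i => ?_, fun i => ?_⟩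
  · beta_reduce
    split_ifs
    · exact ha i
    · simpa only [add_four_add_four] using hb (i + 4)
  · simp only [add_four_lt, add_four_add_four, ite_not]
    split_ifs
    · exact hab i
    · exact (hab (i + 4)).symm

theorem isChain_flatten_ofFn_append_self {α : Type*} {R : α → α → Prop} {m : ℕ}
    {L : Fin (m + 1) → List α} (hne : ∀ i, L i ≠ []) (hL : ∀ i, (L i).IsChain R)
    (hR : ∀ i, ∀ x ∈ (L i).getLast?, ∀ y ∈ (L (i + 1)).head?, R x y) :
    ((List.ofFn L).flatten ++ (List.ofFn L).flatten).IsChain R := by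
  have cyclic : (List.ofFn L).IsChain
      fun l l' => ∀ x ∈ l.getLast?, ∀ y ∈ l'.head?, R x y := by
    rw [List.isChain_ofFn]
    intro i hi
    have hsucc : (⟨i + 1, hi⟩ : Fin (m + 1)) = ⟨i, by lia⟩ + 1 := by
      ext
      simp [Fin.val_add, Nat.mod_eq_of_lt hi]
    rw [hsucc]
    exact hR _
  have hnil : [] ∉ List.ofFn L ++ List.ofFn L := fun hmem => by
    obtain ⟨i, hi⟩ := List.mem_ofFn.1 (or_self_iff.1 (List.mem_append.1 hmem))
    exact hne i hi
  rw [← List.flatten_append, List.isChain_flatten hnil]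
  refine ⟨fun l hl => ?_, List.isChain_append.2 ⟨cyclic, cyclic, fun l hl l' hl' => ?_⟩⟩
  · obtain ⟨i, rfl⟩ := List.mem_ofFn.1 (or_self_iff.1 (List.mem_append.1 hl))
    exact hL i
  · rw [List.ofFn_succ', List.concat_eq_append, List.getLast?_concat, Option.mem_some_iff] at hl
    rw [List.ofFn_succ, List.head?_cons, Option.mem_some_iff] at hl'
    subst hl hl'
    simpa only [Fin.last_add_one] using hR (Fin.last m)

theorem ofFn_sublist_flatten_ofFn {α : Type*} {m : ℕ} {z : Fin m → α} {L : Fin m → List α}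
    (h : ∀ i, z i ∈ L i) : (List.ofFn z).Sublist (List.ofFn L).flatten := by
  induction m with
  | zero => simp
  | succ m ih =>
    rw [List.ofFn_succ, List.ofFn_succ, List.flatten_cons]
    exact (List.singleton_sublist.2 (h 0)).append (ih fun i => h i.succ)

theorem exists_strictMono_get_flatten_ofFn {α : Type*} {m : ℕ} {z : Fin m → α}
    {L : Fin m → List α} (h : ∀ i, z i ∈ L i) :
    ∃ p : Fin m → Fin (List.ofFn L).flatten.length,
      StrictMono p ∧ ∀ i, (List.ofFn L).flatten.get (p i) = z i := by
  obtain ⟨f, hf⟩ := List.sublist_iff_exists_fin_orderEmbedding_get_eq.1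
    (ofFn_sublist_flatten_ofFn h)
  refine ⟨f ∘ Fin.cast List.length_ofFn.symm, f.strictMono.comp (Fin.cast_strictMono _),
    fun i => ?_⟩
  simpa using (hf (i.cast List.length_ofFn.symm)).symm

theorem IsMinorModel.exists_isUnrolledCycle {B : Fin (2 * 4) → Set V}
    (h : IsMinorModel (mobiusLadder 4) G B) (hG : G.Connected) (hfree : ¬ IsMinor K33plus G) :
    ∃ n v t, IsUnrolledCycle G n v ∧ IsRungSequence G n v t := by
  obtain ⟨L, hLB, hnodup, hchain, hlink⟩ := h.exists_lists hG hfree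
  obtain ⟨z, hzB, hz⟩ := h.exists_rung_ends
  have mem_L : ∀ {i x}, x ∈ B i → x ∈ L i := fun {i _} hx => (hLB i).symm.subset hx
  obtain ⟨p, hp, hpz⟩ := exists_strictMono_get_flatten_ofFn fun i => mem_L (hzB i)
  let W := (List.ofFn L).flatten
  have nodup : W.Nodup := by
    refine List.nodup_flatten.2 ⟨fun l hl => ?_, List.pairwise_ofFn.2 fun i j hij x hi hj => ?_⟩
    · obtain ⟨i, rfl⟩ := List.mem_ofFn.1 hl
      exact hnodup i
    · exact hij.ne (h.eq_of_mem ((hLB i).subset hi) ((hLB j).subset hj))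
  have mem : ∀ x, x ∈ W := fun x => by
    obtain ⟨i, hi⟩ := h.exists_mem_of_mobiusLadder hG hfree x
    exact List.mem_flatten.2 ⟨L i, List.mem_ofFn.2 ⟨i, rfl⟩, mem_L hi⟩
  have chain : (W ++ W).IsChain G.Adj :=
    isChain_flatten_ofFn_append_self (fun i => List.ne_nil_of_mem (mem_L (hzB i))) hchain hlink
  have : NeZero W.length := ⟨(List.length_pos_of_mem (mem (z 0))).ne'⟩
  have cycle := isUnrolledCycle_get_intResidue nodup mem chain
  obtain ⟨t, ht⟩ := cycle.exists_isRungSequence hp fun i => by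
    simp only [intResidue_val]
    exact (hpz i).symm ▸ (hpz (i + 4)).symm ▸ hz i
  exact ⟨W.length, _, t, cycle, ht⟩

end UnrolledCycle

section Arcs

variable {V : Type*} {G : SimpleGraph V} {n : ℕ} {v : ℤ → V} {t : ℤ → ℤ}

theorem connected_induce_image_of_ordConnected {f : ℤ → V} {S : Set ℤ} (hS : S.OrdConnected)
    (hne : S.Nonempty) (hadj : ∀ x ∈ S, x + 1 ∈ S → G.Adj (f x) (f (x + 1))) :
    (G.induce (f '' S)).Connected := by
  have reach : ∀ {x y : ℤ} (hx : x ∈ S) (hy : y ∈ S), x ≤ y → (G.induce (f '' S)).Reachable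
      ⟨f x, Set.mem_image_of_mem f hx⟩ ⟨f y, Set.mem_image_of_mem f hy⟩ := by
    intro x y hx hy hxy
    induction y, hxy using Int.leInduction with
    | base => rfl
    | succ y hxy ih =>
      have hyS : y ∈ S := hS.out hx hy ⟨hxy, (lt_add_one y).le⟩
      exact (ih hyS).trans (Adj.reachable (G := G.induce _) (hadj y hyS hy))
  have : Nonempty (f '' S) := (hne.image f).to_subtype
  refine ⟨?_⟩
  rintro ⟨_, x, hx, rfl⟩ ⟨_, y, hy, rfl⟩
  obtain hxy | hyx := le_total x y
  exacts [reach hx hy hxy, (reach hy hx hyx).symm]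

theorem IsRungSequence.eight_le (ht : IsRungSequence G n v t) : 8 ≤ n := by
  have t_add : ∀ k : ℕ, t 0 + k ≤ t k := fun k => by
    induction k with
    | zero => simp
    | succ k ih =>
      have := ht.strictMono (lt_add_one (k : ℤ))
      push_cast
      lia
  have := t_add 8
  have := ht.apply_add_eight 0
  grind

theorem IsUnrolledCycle.injOn_Ico (hv : IsUnrolledCycle G n v) (a : ℤ) :
    Set.InjOn v (Set.Ico a (a + n)) := by
  rintro x ⟨hax, hxa⟩ y ⟨hay, hya⟩ hxy
  have hdvd := ((hv.eq_iff x y).1 hxy).dvd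
  linarith [Int.eq_zero_of_abs_lt_dvd hdvd (by rw [abs_lt]; constructor <;> linarith)]

theorem IsUnrolledCycle.apply_add_natCast (hv : IsUnrolledCycle G n v) (a : ℤ) :
    v (a + n) = v a :=
  (hv.eq_iff _ _).2 (Int.add_modulus_modEq_iff.2 rfl)

theorem isMinorModel_mobiusLadder {m : ℕ} {B : Fin (2 * m) → Set V}
    (hconn : ∀ j, (G.induce (B j)).Connected) (hdisj : ∀ j k, j < k → Disjoint (B j) (B k))
    (hrim : ∀ j k : Fin (2 * m), k.val = (j.val + 1) % (2 * m) → Touches G (B j) (B k))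
    (hrung : ∀ j k : Fin (2 * m), k.val = j.val + m → Touches G (B j) (B k)) :
    IsMinorModel (mobiusLadder m) G B := by
  have touches : ∀ j k : Fin (2 * m),
      k.val = (j.val + 1) % (2 * m) ∨ k.val = (j.val + m) % (2 * m) → Touches G (B j) (B k) := by
    rintro j k (hk | hk)
    · exact hrim j k hk
    · obtain hjm | hmj := lt_or_ge (j.val + m) (2 * m)
      · exact hrung j k (by rwa [Nat.mod_eq_of_lt hjm] at hk)
      · rw [Nat.mod_eq_sub_mod hmj, Nat.mod_eq_of_lt (by lia)] at hk
        exact (hrung k j (by lia)).symm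
  refine ⟨hconn, (pairwise_disjoint_on _).2 fun j k => hdisj j k, fun j k hjk => ?_⟩
  obtain ⟨-, hjk | hkj⟩ := hjk
  exacts [touches j k hjk, (touches k j hkj).symm]

theorem IsUnrolledCycle.isMinorModel_arcs (hv : IsUnrolledCycle G n v)
    (ht : IsRungSequence G n v t) {i : ℤ} {l r : ℕ → ℤ} (hl : ∀ k : ℕ, k < 8 → l k ≤ t (i + k))
    (hr : ∀ k : ℕ, k < 8 → t (i + k) ≤ r k) (hlt : ∀ k < 8, r k < l (k + 1))
    (hlast : l 8 = l 0 + n) (hadj : ∀ k < 8, G.Adj (v (r k)) (v (l (k + 1)))) :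
    IsMinorModel (mobiusLadder 4) G fun j : Fin (2 * 4) => v '' Set.Icc (l j) (r j) := by
  have hlr : ∀ j : Fin (2 * 4), l j ≤ r j := fun j => (hl j j.2).trans (hr j j.2)
  have l_mono : MonotoneOn l (Set.Iic 8) := monotoneOn_of_le_add_one Set.ordConnected_Iic
    fun k _ _ hk => (((hl k hk).trans (hr k hk)).trans_lt (hlt k hk)).le
  refine isMinorModel_mobiusLadder (fun j => ?_) (fun j k hjk => ?_) (fun j k hk => ?_)
    fun j k hk => ?_
  · exact connected_induce_image_of_ordConnected Set.ordConnected_Icc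
      (Set.nonempty_Icc.2 (hlr j)) fun x _ _ => hv.adj_add_one x
  · have sub : ∀ j : Fin (2 * 4), Set.Icc (l j) (r j) ⊆ Set.Ico (l 0) (l 0 + n) := fun j x hx =>
      ⟨(l_mono (Nat.zero_le 8) j.2.le (Nat.zero_le j)).trans hx.1,
        (hx.2.trans_lt (hlt j j.2)).trans_le (hlast ▸ l_mono j.2 (le_refl 8) j.2)⟩
    have hle : l (j + 1) ≤ l k := l_mono j.2 k.2.le hjk
    refine Set.disjoint_image_image fun x hx y hy hxy => ?_
    have := hv.injOn_Ico (l 0) (sub j hx) (sub k hy) hxy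
    linarith [hx.2, hlt j j.2, hy.1]
  · refine ⟨_, ⟨r j, ⟨hlr j, le_rfl⟩, rfl⟩, _, ⟨l k, ⟨le_rfl, hlr k⟩, rfl⟩, ?_⟩
    obtain hj | hj : j.val + 1 < 2 * 4 ∨ j.val = 7 := by lia
    · simpa only [hk, Nat.mod_eq_of_lt hj] using hadj j j.2
    · simpa only [hk, hj, hlast, hv.apply_add_natCast] using hadj 7 (by lia)
  · have rung_mem : ∀ k : Fin (2 * 4), t (i + k.val) ∈ Set.Icc (l k) (r k) :=
      fun k => ⟨hl k k.2, hr k k.2⟩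
    refine ⟨_, ⟨_, rung_mem j, rfl⟩, _, ⟨_, rung_mem k, rfl⟩, ?_⟩
    simpa only [hk, Nat.cast_add, Nat.cast_ofNat, ← add_assoc] using ht.adj (i + j.val)

theorem IsUnrolledCycle.isMinorModel_cuts (hv : IsUnrolledCycle G n v)
    (ht : IsRungSequence G n v t) {i : ℤ} {s : ℕ → ℤ} (hs : ∀ k : ℕ, k < 8 → s k ≤ t (i + k))
    (hs' : ∀ k : ℕ, k < 8 → t (i + k) < s (k + 1)) (hlast : s 8 = s 0 + n) :
    IsMinorModel (mobiusLadder 4) G fun j : Fin (2 * 4) => v '' Set.Ico (s j) (s (j + 1)) := by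
  simp only [← Set.Icc_sub_one_right_eq_Ico]
  exact hv.isMinorModel_arcs ht hs (fun k hk => Int.le_sub_one_of_lt (hs' k hk))
    (fun k _ => sub_one_lt _) hlast fun k _ => by
      simpa only [sub_add_cancel] using hv.adj_add_one (s (k + 1) - 1)

theorem IsUnrolledCycle.not_adj_of_mem_Icc (hv : IsUnrolledCycle G n v)
    (ht : IsRungSequence G n v t) (hG : G.Connected) (hfree : ¬ IsMinor K33plus G) {i a b : ℤ}
    (ha : t i ≤ a) (hab : a + 2 ≤ b) (hb : b ≤ t (i + 1)) : ¬ G.Adj (v a) (v b) := by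
  intro hadj
  have t_mono : ∀ {j k : ℤ}, j ≤ k → t (i + j) ≤ t (i + k) :=
    fun h => ht.strictMono.monotone (by lia)
  have t_succ : ∀ k : ℕ, t (i + k) < t (i + (k + 1)) := fun k => ht.strictMono (by lia)
  have model := hv.isMinorModel_arcs ht (i := i)
    (l := fun k => if k = 1 then b else t (i + k))
    (r := fun k => if k = 0 then a else t (i + (k + 1)) - 1)
    (fun k _ => by split_ifs with hk <;> simp [hk, hb])
    (fun k _ => by split_ifs with hk <;> [simp [hk, ha]; linarith [t_succ k]])
    (fun k _ => by grind) (by simp [ht.apply_add_eight])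
    (fun k _ => by
      by_cases hk : k = 0
      · simpa [hk]
      · simpa [hk] using hv.adj_add_one (t (i + (k + 1)) - 1))
  obtain ⟨k, x, ⟨hlx, hxr⟩, hxa⟩ := model.exists_mem_of_mobiusLadder hG hfree (v (a + 1))
  have b_le := hb.trans (t_mono (show (1 : ℤ) ≤ 8 by lia))
  have hx : x ∈ Set.Icc (t i) a ∪ Set.Ico b (t (i + 8)) := by
    by_cases hk : k.val = 0
    · exact .inl ⟨by simpa [hk] using hlx, by simpa [hk] using hxr⟩
    · have := t_mono (show (1 : ℤ) ≤ k by lia)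
      have := t_mono (show (k + 1 : ℤ) ≤ 8 by lia)
      exact .inr ⟨by grind, by grind⟩
  rw [ht.apply_add_eight] at b_le hx
  have hxa' : x = a + 1 := hv.injOn_Ico (t i) (by grind) (by grind) hxa
  grind

/-- A chord joining the arcs `0` and `2` would put the tail of a `K33+` minor on arc `1`. -/
theorem IsUnrolledCycle.not_adj_of_mem_Ioo (hv : IsUnrolledCycle G n v)
    (ht : IsRungSequence G n v t) (hfree : ¬ IsMinor K33plus G) {i a b : ℤ}
    (ha : a ∈ Set.Ioo (t (i - 1)) (t (i + 1))) (hb : b ∈ Set.Ioo (t (i + 1)) (t (i + 3))) :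
    ¬ G.Adj (v a) (v b) := by
  intro hadj
  have t_succ : ∀ k : ℕ, t (i + k) < t (i + (k + 1)) := fun k => ht.strictMono (by lia)
  have t_seven : t (i + 7) = t (i - 1) + n := by
    rw [← ht.apply_add_eight]
    ring_nf
  have t_pred : t (i - 1) < t i := ht.strictMono (sub_one_lt i)
  have model := hv.isMinorModel_cuts ht (i := i)
    (s := fun k => if k = 0 then min a (t i) else if k = 1 then max a (t i) + 1 else
      if k = 2 then t (i + 1) + 1 else if k = 8 then min a (t i) + n else t (i + k))
    (fun k hk => by grind) (fun k hk => by grind) rfl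
  refine hfree (isMinor_K33plus_mobiusLadder_sup_fromRel_zero_two.of_isMinorModel
    (model.sup_fromRel ?_))
  rintro _ _ ⟨rfl, rfl⟩
  refine ⟨_, ⟨a, ?_, rfl⟩, _, ⟨b, ?_, rfl⟩, hadj⟩
  · grind
  · grind

theorem IsUnrolledCycle.apply_add_three_le (hv : IsUnrolledCycle G n v)
    (ht : IsRungSequence G n v t) (hG : G.Connected) (hfree : ¬ IsMinor K33plus G) {i a b : ℤ}
    (ha : t (i - 1) < a) (ha' : a ≤ t i) (hab : a + 2 ≤ b) (hadj : G.Adj (v a) (v b)) :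
    t (i + 3) ≤ b := by
  by_contra! hb
  have t_lt : t i < t (i + 1) := ht.strictMono (lt_add_one i)
  obtain hb₀ | hb₀ := le_or_gt b (t i)
  · exact hv.not_adj_of_mem_Icc ht hG hfree ha.le hab (by rwa [sub_add_cancel]) hadj
  obtain hb₁ | hb₁ := lt_or_ge (t (i + 1)) b
  · exact hv.not_adj_of_mem_Ioo ht hfree ⟨ha, ha'.trans_lt t_lt⟩ ⟨hb₁, hb⟩ hadj
  obtain rfl | ha₀ := ha'.eq_or_lt
  · exact hv.not_adj_of_mem_Icc ht hG hfree le_rfl hab hb₁ hadj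
  · have t_pred : t (i - 1 - 1) < t (i - 1) := ht.strictMono (sub_one_lt _)
    have t_two : t (i + 1) < t (i - 1 + 3) := ht.strictMono (by lia)
    refine hv.not_adj_of_mem_Ioo ht hfree (i := i - 1) (a := a) (b := b) ?_ ?_ hadj
    · rw [sub_add_cancel]
      exact ⟨t_pred.trans ha, ha₀⟩
    · rw [sub_add_cancel]
      exact ⟨hb₀, hb₁.trans_lt t_two⟩

theorem exists_apply_sub_one_lt_and_le (ht : StrictMono t) (a : ℤ) :
    ∃ i, t (i - 1) < a ∧ a ≤ t i := by
  obtain ⟨_, ⟨l, rfl⟩, hl⟩ := not_bddBelow_iff.1 ht.not_bddBelow_range_of_isPredArchimedean a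
  obtain ⟨_, ⟨u, rfl⟩, hu⟩ := not_bddAbove_iff.1 ht.not_bddAbove_range_of_isSuccArchimedean a
  obtain ⟨i, hi, hmin⟩ := Int.exists_least_of_bdd (P := fun i => a ≤ t i)
    ⟨l, fun z hz => (ht.lt_iff_lt.1 (hl.trans_le hz)).le⟩ ⟨u, hu.le⟩
  exact ⟨i, not_le.1 fun h => (sub_one_lt i).not_ge (hmin _ h), hi⟩

/-- Each chord spans three arcs between ends of rungs; two such chords side by side give `K5h`. -/
theorem IsUnrolledCycle.not_adj_of_adj_of_lt (hv : IsUnrolledCycle G n v)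
    (ht : IsRungSequence G n v t) (hG : G.Connected)
    (hfree : ¬ IsMinor K33plus G ∧ ¬ IsMinor K5h G) {a b c d : ℤ} (hab : a + 2 ≤ b) (hbc : b < c)
    (hcd : c + 2 ≤ d) (hda : d < a + n) (hadj : G.Adj (v a) (v b)) : ¬ G.Adj (v c) (v d) := by
  intro hadj'
  obtain ⟨i, hi, hi'⟩ := exists_apply_sub_one_lt_and_le ht.strictMono a
  obtain ⟨j, hj, hj'⟩ := exists_apply_sub_one_lt_and_le ht.strictMono c
  have hib := hv.apply_add_three_le ht hG hfree.1 hi hi' hab hadj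
  have hjd := hv.apply_add_three_le ht hG hfree.1 hj hj' hcd hadj'
  obtain rfl : j = i + 4 := by
    have hij : i + 3 < j := ht.strictMono.lt_iff_lt.1 ((hib.trans_lt hbc).trans_le hj')
    have hji : j + 3 < i + 8 := ht.strictMono.lt_iff_lt.1 (by
      rw [ht.apply_add_eight]
      linarith)
    lia
  have t_succ : ∀ k : ℕ, t (i + k) < t (i + (k + 1)) := fun k => ht.strictMono (by lia)
  have t_seven : t (i + 7) = t (i - 1) + n := by
    rw [← ht.apply_add_eight]
    ring_nf
  have model := hv.isMinorModel_cuts ht (i := i)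
    (s := fun k => if k = 0 then a else if k = 4 then c else if k = 8 then a + n else t (i + k))
    (fun k hk => by grind) (fun k hk => by grind) rfl
  refine hfree.2 (isMinor_K5h_mobiusLadder_sup_fromRel_zero_three_four_seven.of_isMinorModel
    (model.sup_fromRel ?_))
  rintro _ _ (⟨rfl, rfl⟩ | ⟨rfl, rfl⟩)
  · exact ⟨_, ⟨a, by grind, rfl⟩, _, ⟨b, by grind, rfl⟩, hadj⟩
  · exact ⟨_, ⟨c, by grind, rfl⟩, _, ⟨d, by grind, rfl⟩, hadj'⟩

end Arcs

section Stretching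

variable {V : Type*} {G : SimpleGraph V} {n : ℕ} {v : ℤ → V} {t : ℤ → ℤ}

theorem exists_addConstMap_of_noncrossing {S : Set (ℤ × ℤ)} (hne : S.Nonempty)
    (hle : ∀ s ∈ S, s.1 ≤ s.2) (hglide : ∀ a b, (a, b) ∈ S ↔ (b, a + n) ∈ S)
    (hcross : ∀ s ∈ S, ∀ s' ∈ S, s.1 < s'.1 → s.2 ≤ s'.2) :
    ∃ g : AddConstMap ℤ ℤ (2 * n) n, (∀ x, g x ≤ g (x + 1) ∧ g (x + 1) ≤ g x + 1) ∧
      ∀ a b, (a, b) ∈ S → ∃ x, g x = a ∧ g (x + n) = b := by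
  -- The least monotone unit-step function taking each `a + b` with `(a, b) ∈ S` to `a`.
  have sup_exists : ∀ x, ∃ c, IsLUB ((fun s : ℤ × ℤ => min s.1 (x - s.2)) '' S) c := fun x => by
    refine ⟨_, isLUB_csSup (hne.image _) ⟨max x 0, ?_⟩⟩
    rintro _ ⟨s, hs, rfl⟩
    have := hle s hs
    grind
  choose g hg using sup_exists
  have le_g : ∀ {a b}, (a, b) ∈ S → ∀ x, min a (x - b) ≤ g x :=
    fun hs x => (hg x).1 (Set.mem_image_of_mem _ hs)
  have g_le : ∀ {x c}, (∀ a b, (a, b) ∈ S → min a (x - b) ≤ c) → g x ≤ c :=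
    fun h => (isLUB_le_iff (hg _)).2 (Set.forall_mem_image.2 fun s hs => h s.1 s.2 hs)
  have g_add : ∀ {a b}, (a, b) ∈ S → g (a + b) = a := fun {a b} hs => by
    refine le_antisymm (g_le fun a' b' hs' => ?_) (by simpa using le_g hs (a + b))
    have := hcross _ hs _ hs'
    grind
  have hshift : ∀ a b, (a, b) ∈ S ↔ (a + n, b + n) ∈ S := fun a b =>
    (hglide a b).trans (hglide b (a + n))
  refine ⟨⟨g, fun x => le_antisymm (g_le fun a b hs => ?_) ?_⟩, fun x => ⟨?_, ?_⟩,
    fun a b hs => ⟨a + b, g_add hs, ?_⟩⟩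
  · have := le_g ((hshift (a - n) (b - n)).2 (by simpa using hs)) x
    grind
  · rw [← le_sub_iff_add_le]
    refine g_le fun a b hs => ?_
    have := le_g ((hshift a b).1 hs) (x + 2 * n)
    grind
  · exact g_le fun a b hs => (min_le_min_left a (by lia)).trans (le_g hs (x + 1))
  · refine g_le fun a b hs => le_trans ?_ (add_le_add_left (le_g hs x) 1)
    grind
  · have := g_add ((hglide a b).1 hs)
    rwa [← add_assoc, add_comm b a] at this

theorem exists_apply_eq_and_apply_add_one_eq [NeZero n] (g : AddConstMap ℤ ℤ (2 * n) n)
    (hg : ∀ x, g x ≤ g (x + 1) ∧ g (x + 1) ≤ g x + 1) (u : ℤ) :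
    ∃ x, g x = u ∧ g (x + 1) = u + 1 := by
  have g_mono : Monotone g := monotone_int_of_le_succ fun x => (hg x).1
  have n_pos : 1 ≤ (n : ℤ) := Int.natCast_pos.2 (NeZero.pos n)
  have g_zsmul : ∀ k : ℤ, g (k • (2 * n : ℤ)) = g 0 + k * n := fun k => by
    rw [AddConstMapClass.map_zsmul_const, smul_eq_mul]
  have bdd : ∃ b, ∀ x, g x ≤ u → x ≤ b := by
    refine ⟨(|u - g 0| + 1) • (2 * n : ℤ), fun x hx => (g_mono.reflect_lt (hx.trans_lt ?_)).le⟩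
    rw [g_zsmul]
    nlinarith [le_abs_self (u - g 0), abs_nonneg (u - g 0)]
  have inh : ∃ x, g x ≤ u := by
    refine ⟨(-|u - g 0|) • (2 * n : ℤ), ?_⟩
    rw [g_zsmul]
    nlinarith [neg_abs_le (u - g 0), abs_nonneg (u - g 0)]
  obtain ⟨x, hx, hmax⟩ := Int.exists_greatest_of_bdd bdd inh
  have hlt : u < g (x + 1) := not_le.1 fun h => (lt_add_one x).not_ge (hmax _ h)
  have := hg x
  exact ⟨x, by lia, by lia⟩

theorem mobiusLadder_adj_intResidue_add_one [NeZero n] (x : ℤ) :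
    (mobiusLadder n).Adj (intResidue (2 * n) x) (intResidue (2 * n) (x + 1)) := by
  refine (fromRel_adj _ _ _).2 ⟨fun heq => ?_, .inl (.inl ?_)⟩
  · have hdvd : ((2 * n : ℕ) : ℤ) ∣ x + 1 - x := (intResidue_eq_iff.1 heq).dvd
    rw [add_sub_cancel_left] at hdvd
    have := Int.le_of_dvd one_pos hdvd
    have := NeZero.pos n
    lia
  · exact_mod_cast val_intResidue_add_natCast x 1

theorem mobiusLadder_adj_intResidue_add_natCast [NeZero n] (x : ℤ) :
    (mobiusLadder n).Adj (intResidue (2 * n) x) (intResidue (2 * n) (x + n)) := by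
  refine (fromRel_adj _ _ _).2 ⟨fun heq => ?_, .inl (.inr (val_intResidue_add_natCast x n))⟩
  have hdvd : ((2 * n : ℕ) : ℤ) ∣ x + n - x := (intResidue_eq_iff.1 heq).dvd
  rw [add_sub_cancel_left, Int.natCast_dvd_natCast] at hdvd
  have := Nat.le_of_dvd (NeZero.pos n) hdvd
  have := NeZero.pos n
  lia

theorem IsUnrolledCycle.exists_mem_Ico_apply_eq [NeZero n] (hv : IsUnrolledCycle G n v) (a : ℤ)
    (w : V) : ∃ b ∈ Set.Ico a (a + n), v b = w := by
  obtain ⟨c, rfl⟩ := hv.surjective w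
  obtain ⟨k, hk, hkn, hmod⟩ := Int.existsUnique_equiv (c - a) (Int.natCast_pos.2 (NeZero.pos n))
  refine ⟨a + k, ⟨by linarith, by linarith⟩, (hv.eq_iff _ _).2 ?_⟩
  simpa using hmod.add_left a

theorem IsUnrolledCycle.rim_or_chord_of_adj [NeZero n] (hv : IsUnrolledCycle G n v) {w w' : V}
    (h : G.Adj w w') : (∃ a, v a = w ∧ v (a + 1) = w') ∨ (∃ a, v a = w' ∧ v (a + 1) = w) ∨
      ∃ a b : ℤ, a + 2 ≤ b ∧ b + 2 ≤ a + n ∧ v a = w ∧ v b = w' := by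
  obtain ⟨a, rfl⟩ := hv.surjective w
  obtain ⟨b, ⟨hab, hba⟩, rfl⟩ := hv.exists_mem_Ico_apply_eq a w'
  have hne : a ≠ b := fun heq => h.ne (congrArg v heq)
  obtain rfl | hb₁ := eq_or_ne b (a + 1)
  · exact .inl ⟨a, rfl, rfl⟩
  obtain hb₂ | hb₂ := eq_or_ne (b + 1) (a + n)
  · exact .inr (.inl ⟨b, rfl, by rw [hb₂, hv.apply_add_natCast]⟩)
  · exact .inr (.inr ⟨a, b, by lia, by lia, rfl, rfl⟩)

theorem IsUnrolledCycle.apply_addConstMap_val_intResidue [NeZero n] (hv : IsUnrolledCycle G n v)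
    (g : AddConstMap ℤ ℤ (2 * n) n) (x : ℤ) : v (g (intResidue (2 * n) x : ℕ)) = v (g x) := by
  have hx : x = (intResidue (2 * n) x : ℕ) + (x / (2 * n)) • (2 * n : ℤ) := by
    rw [natCast_val_intResidue, smul_eq_mul, mul_comm (x / _)]
    exact (Int.emod_add_mul_ediv x (2 * n)).symm
  conv_rhs => rw [hx, AddConstMapClass.map_add_zsmul]
  exact (hv.eq_iff _ _).2 (Int.modEq_iff_dvd.2 (by simp))

theorem IsUnrolledCycle.preimage_singleton_eq_image_intResidue [NeZero n]
    (hv : IsUnrolledCycle G n v) (g : AddConstMap ℤ ℤ (2 * n) n) (u : ℤ) :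
    (fun i : Fin (2 * n) => v (g (i : ℕ))) ⁻¹' {v u} = intResidue (2 * n) '' (g ⁻¹' {u}) := by
  ext i
  constructor
  · intro hi
    obtain ⟨k, hk⟩ := ((hv.eq_iff _ _).1 hi).dvd
    refine ⟨(i : ℕ) + k • (2 * n : ℤ), ?_, ?_⟩
    · rw [Set.mem_preimage, AddConstMapClass.map_add_zsmul, smul_eq_mul, Set.mem_singleton_iff]
      linarith
    · exact (intResidue_eq_iff.2 (Int.modEq_iff_dvd.2 (by simp))).trans (intResidue_val i)
  · rintro ⟨x, rfl, rfl⟩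
    exact hv.apply_addConstMap_val_intResidue g x

theorem IsUnrolledCycle.isMinor_mobiusLadder_of_addConstMap [NeZero n]
    (hv : IsUnrolledCycle G n v) (g : AddConstMap ℤ ℤ (2 * n) n)
    (hg : ∀ x, g x ≤ g (x + 1) ∧ g (x + 1) ≤ g x + 1)
    (hchord : ∀ a b : ℤ, a + 2 ≤ b → b + 2 ≤ a + n → G.Adj (v a) (v b) →
      ∃ x, g x = a ∧ g (x + n) = b) : IsMinor G (mobiusLadder n) := by
  have g_mono : Monotone g := monotone_int_of_le_succ fun x => (hg x).1
  let φ : Fin (2 * n) → V := fun i => v (g (i : ℕ))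
  have φ_intResidue : ∀ x, φ (intResidue (2 * n) x) = v (g x) :=
    hv.apply_addConstMap_val_intResidue g
  refine (isMinorModel_fiber φ (fun w => ?_) fun w w' hadj => ?_).isMinor
  · obtain ⟨u, rfl⟩ := hv.surjective w
    obtain ⟨x, hx, -⟩ := exists_apply_eq_and_apply_add_one_eq g hg u
    rw [hv.preimage_singleton_eq_image_intResidue g]
    exact connected_induce_image_of_ordConnected (Set.ordConnected_singleton.preimage_mono g_mono)
      ⟨x, hx⟩ fun x _ _ => mobiusLadder_adj_intResidue_add_one x
  · obtain ⟨a, rfl, rfl⟩ | ⟨a, rfl, rfl⟩ | ⟨a, b, hab, hba, rfl, rfl⟩ :=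
      hv.rim_or_chord_of_adj hadj
    · obtain ⟨x, rfl, hx⟩ := exists_apply_eq_and_apply_add_one_eq g hg a
      exact ⟨_, _, φ_intResidue x, hx ▸ φ_intResidue (x + 1),
        mobiusLadder_adj_intResidue_add_one x⟩
    · obtain ⟨x, rfl, hx⟩ := exists_apply_eq_and_apply_add_one_eq g hg a
      exact ⟨_, _, hx ▸ φ_intResidue (x + 1), φ_intResidue x,
        (mobiusLadder_adj_intResidue_add_one x).symm⟩
    · obtain ⟨x, rfl, rfl⟩ := hchord a b hab hba hadj
      exact ⟨_, _, φ_intResidue x, φ_intResidue (x + n),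
        mobiusLadder_adj_intResidue_add_natCast x⟩

theorem IsUnrolledCycle.isMinor_mobiusLadder (hv : IsUnrolledCycle G n v)
    (ht : IsRungSequence G n v t) (hG : G.Connected)
    (hfree : ¬ IsMinor K33plus G ∧ ¬ IsMinor K5h G) : IsMinor G (mobiusLadder n) := by
  have : NeZero n := ⟨by have := ht.eight_le; lia⟩
  let chords : Set (ℤ × ℤ) :=
    {s | s.1 + 2 ≤ s.2 ∧ s.2 + 2 ≤ s.1 + n ∧ G.Adj (v s.1) (v s.2)}
  have hne : chords.Nonempty := by
    have t_lt : ∀ i, t i < t (i + 1) := fun i => ht.strictMono (lt_add_one i)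
    have := ht.apply_add_eight 0
    exact ⟨(t 0, t (0 + 4)), by grind, by grind, ht.adj 0⟩
  have hglide : ∀ a b, (a, b) ∈ chords ↔ (b, a + n) ∈ chords := fun a b => by
    have hadj : G.Adj (v b) (v (a + n)) ↔ G.Adj (v a) (v b) := by
      rw [hv.apply_add_natCast, adj_comm]
    simp only [chords, Set.mem_ofPred_eq, hadj]
    grind
  have hcross : ∀ s ∈ chords, ∀ s' ∈ chords, s.1 < s'.1 → s.2 ≤ s'.2 := by
    rintro ⟨a, b⟩ ⟨-, hba, hadj⟩ ⟨a', b'⟩ ⟨hab', -, hadj'⟩ hlt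
    by_contra! hlt'
    refine hv.not_adj_of_adj_of_lt ht hG hfree hab' hlt' hba (by simpa) hadj' ?_
    rw [hv.apply_add_natCast]
    exact hadj.symm
  obtain ⟨g, hg, hchord⟩ := exists_addConstMap_of_noncrossing hne
    (fun s hs => by linarith [hs.1]) hglide hcross
  exact hv.isMinor_mobiusLadder_of_addConstMap g hg fun a b hab hba hadj =>
    hchord a b ⟨hab, hba, hadj⟩

end Stretching

theorem stmt9_general {V : Type*} (G : SimpleGraph V) (hconn : G.Connected)
    (hfree : ¬ IsMinor K33plus G ∧ ¬ IsMinor K5h G) (hm : IsMinor (mobiusLadder 4) G) :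
    ∃ n, 4 ≤ n ∧ IsMinor G (mobiusLadder n) := by
  obtain ⟨B, hB⟩ := hm.exists_isMinorModel
  obtain ⟨n, v, t, hv, ht⟩ := hB.exists_isUnrolledCycle hconn hfree.1
  exact ⟨n, le_trans (by lia) ht.eight_le, hv.isMinor_mobiusLadder ht hconn hfree⟩

/-- A connected {K33+, K5h}-free graph with an `M₄` minor is a minor of `M_n`
for some `n ≥ 4`. -/
theorem stmt9 {V : Type} [Fintype V] (G : SimpleGraph V) (hconn : G.Connected)
    (hfree : ¬ IsMinor K33plus G ∧ ¬ IsMinor K5h G)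
    (hm : IsMinor (mobiusLadder 4) G) :
    ∃ n, 4 ≤ n ∧ IsMinor G (mobiusLadder n) :=
  stmt9_general G hconn hfree hm
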